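/- Let M be a semi-finite von Neumann algebra (i.e., a von Neumann algebra admitting a faithful normal semifinite trace) and let Δ : M → M be a 2-local derivation. Then Δ is a derivation, i.e., Δ is linear and satisfies Δ(xy) = Δ(x)y + xΔ(y) for all x, y ∈ M. -/

import Mathlib

/-!
A derivation `D` of a C⋆-algebra is bounded, because `1 + tD` does not decrease the norm of positive
elements. Let `φ` be a linear extension of the trace. If a unitary `u` commutes with an element `w`
of finite trace, then `φ (w u⁻ⁿ D (uⁿ)) = n φ (w u⁻¹ D u)` is bounded in `n`, so it vanishes;
consequently `φ ∘ D` is zero on products `p` of two elements of the definition ideal. For a 2-local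
derivation `Δ` this gives `φ (Δ a * p) = -φ (a * Δ p)`, as `Δ` agrees with one derivation at `a` and
at `p`. The right-hand side is linear in `a` and the trace is faithful, so `Δ` is linear. Comparing
`Δ` with a derivation at `x` and `x * x` shows that it is a Jordan derivation, and by Brešar's
theorem a Jordan derivation of a 2-torsion-free semiprime ring is a derivation.
-/

open scoped ENNReal NNReal

variable {H : Type*} [NormedAddCommGroup H] [InnerProductSpace ℂ H] [CompleteSpace H]

/-- Scalar multiplication is inherited by a von Neumann algebra from `B(H)`. -/
instance : SMulMemClass (VonNeumannAlgebra H) ℂ (H →L[ℂ] H) where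
  smul_mem {M} c _x hx := M.toStarSubalgebra.smul_mem hx c

/-- A map `D : M → M` is a derivation: it is `ℂ`-linear and satisfies the Leibniz rule. -/
def IsDerivation (M : VonNeumannAlgebra H) (D : M → M) : Prop :=
  (∀ x y : M, D (x + y) = D x + D y) ∧
  (∀ (c : ℂ) (x : M), D (c • x) = c • D x) ∧
  (∀ x y : M, D (x * y) = D x * y + x * D y)

/-- A map `Δ : M → M` (not assumed linear) is a 2-local derivation if for every pair `x, y`
there is a derivation agreeing with `Δ` at `x` and at `y`. -/
def Is2LocalDerivation (M : VonNeumannAlgebra H) (Δ : M → M) : Prop :=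
  ∀ x y : M, ∃ D : M → M, IsDerivation M D ∧ Δ x = D x ∧ Δ y = D y

/-- An element of a von Neumann algebra is positive if it is a positive operator on `H`. -/
def IsPos (M : VonNeumannAlgebra H) (x : M) : Prop :=
  ContinuousLinearMap.IsPositive (x : H →L[ℂ] H)

/-- The operator (Loewner) order on a von Neumann algebra: `x ≤ y` iff `y - x` is positive. -/
def OpLE (M : VonNeumannAlgebra H) (x y : M) : Prop :=
  ContinuousLinearMap.IsPositive ((y : H →L[ℂ] H) - (x : H →L[ℂ] H))

/-- A faithful normal semifinite trace on a von Neumann algebra `M`: a map on `M` which, on the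
positive cone, is additive and positively homogeneous, satisfies `τ(xx⋆) = τ(x⋆x)`, is faithful,
normal (commutes with suprema of bounded monotone increasing nets of positive elements) and
semifinite. -/
structure FNSTrace (M : VonNeumannAlgebra H) : Type _ where
  τ : M → ℝ≥0∞
  additive : ∀ x y : M, IsPos M x → IsPos M y → τ (x + y) = τ x + τ y
  pos_smul : ∀ (c : ℝ≥0) (x : M), IsPos M x → τ ((c : ℂ) • x) = c * τ x
  tracial : ∀ x : M, τ (x * star x) = τ (star x * x)
  faithful : ∀ x : M, IsPos M x → τ x = 0 → x = 0
  normal : ∀ {ι : Type} [Nonempty ι] [Preorder ι] [IsDirected ι (· ≤ ·)]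
      (f : ι → M) (s : M), (∀ i, IsPos M (f i)) →
      (∀ i j, i ≤ j → OpLE M (f i) (f j)) →
      (∀ i, OpLE M (f i) s) → (∀ u : M, (∀ i, OpLE M (f i) u) → OpLE M s u) →
      τ s = ⨆ i, τ (f i)
  semifinite : ∀ x : M, IsPos M x → x ≠ 0 →
      ∃ y : M, IsPos M y ∧ y ≠ 0 ∧ OpLE M y x ∧ τ y < ⊤

/-- `a` belongs to the definition ideal `m_τ = {a ∈ M : τ(|a|) < ∞}`, where `|a|` is the unique
positive square root of `a⋆a`. -/
def MemIdeal (M : VonNeumannAlgebra H) (τ : M → ℝ≥0∞) (a : M) : Prop :=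
  ∃ b : M, IsPos M b ∧ b * b = star a * a ∧ τ b < ⊤

/-! ### Jordan derivations of semiprime rings -/

/-- The Leibniz rule for a map on a possibly noncommutative ring (Mathlib's `Derivation` requires a
commutative domain). -/
def IsLeibniz {R : Type*} [Mul R] [Add R] (D : R → R) : Prop :=
  ∀ x y, D (x * y) = D x * y + x * D y

/-- The Leibniz rule restricted to squares: an additive map with this property is a Jordan
derivation. -/
def IsJordanLeibniz {R : Type*} [Mul R] [Add R] (D : R → R) : Prop :=
  ∀ x, D (x * x) = D x * x + x * D x

/-- Semiprimeness of a ring, in its elementwise form `pRp = 0 → p = 0`. -/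
def IsSemiprimeRing (R : Type*) [Ring R] : Prop :=
  ∀ p : R, (∀ x, p * x * p = 0) → p = 0

section Semiprime

variable {R : Type*} [Ring R]

namespace IsSemiprimeRing

lemma eq_zero_of_central_of_mul_self_eq_zero (hR : IsSemiprimeRing R) {e : R}
    (hc : ∀ x, Commute e x) (h : e * e = 0) : e = 0 :=
  hR e fun x => by rw [(hc x).eq, mul_assoc, h, mul_zero]

lemma eq_zero_of_central_of_cube_eq_zero (hR : IsSemiprimeRing R) {e : R}
    (hc : ∀ x, Commute e x) (h : e * e * e = 0) : e = 0 := by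
  refine hR.eq_zero_of_central_of_mul_self_eq_zero hc ?_
  refine hR.eq_zero_of_central_of_mul_self_eq_zero (fun x => (hc x).mul_left (hc x)) ?_
  rw [← mul_assoc, h, zero_mul]

/-- In `p x q y p x q`, three swaps `p · q ↦ -(q · p)` return the product to itself with the
opposite sign. -/
lemma mul_mul_eq_zero_of_add_swap (hR : IsSemiprimeRing R) (h2 : IsSMulRegular R 2) {p q : R}
    (h : ∀ x, p * x * q + q * x * p = 0) (x : R) : p * x * q = 0 := by
  have swap (x : R) : p * x * q = -(q * x * p) := eq_neg_of_add_eq_zero_left (h x)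
  have neg_self (y : R) : p * x * q * y * (p * x * q) = -(p * x * q * y * (p * x * q)) := by
    calc p * x * q * y * (p * x * q)
        = p * x * q * (y * p * x * q) := by noncomm_ring
      _ = -(q * (x * p * y) * p * (x * q)) := by rw [swap x]; noncomm_ring
      _ = p * x * (p * y * q) * (x * q) := by rw [← neg_mul, ← swap]; noncomm_ring
      _ = -(p * x * q * y * (p * x * q)) := by rw [swap y]; noncomm_ring
  refine hR _ fun y => h2 ?_
  simpa only [smul_zero, two_smul] using add_eq_zero_iff_eq_neg.mpr (neg_self y)

/-- Linearizing `f s * x * g s = 0` gives `f s * x * g t = -(f t * x * g s)`, so that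
`f s x g t y f s x g t` contains a factor `f s z g s = 0`. -/
lemma mul_mul_eq_zero_of_diagonal (hR : IsSemiprimeRing R) {S : Type*} [AddCommGroup S]
    (f g : S →+ R) (h : ∀ s x, f s * x * g s = 0) (s t : S) (x : R) : f s * x * g t = 0 := by
  have swap (x : R) : f s * x * g t = -(f t * x * g s) := by
    have hst := h (s + t) x
    simp only [map_add, add_mul, mul_add, h, zero_add, add_zero] at hst
    exact eq_neg_of_add_eq_zero_right hst
  refine hR _ fun y => ?_
  calc f s * x * g t * y * (f s * x * g t)
      = f s * x * g t * y * -(f t * x * g s) := by rw [swap x]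
    _ = -(f s * (x * g t * y * f t * x) * g s) := by noncomm_ring
    _ = 0 := by rw [h, neg_zero]

end IsSemiprimeRing

/-- The biadditive map `(x, y) ↦ xy - yx`. -/
def commutatorHom (R : Type*) [Ring R] : R →+ R →+ R :=
  AddMonoidHom.mul - AddMonoidHom.mul.flip

lemma commutatorHom_apply (x y : R) : commutatorHom R x y = x * y - y * x := rfl

/-- The biadditive map `(x, y) ↦ D (xy) - D x y - x D y`, measuring the failure of the Leibniz
rule. -/
def leibnizDefect (D : R →+ R) : R →+ R →+ R :=
  AddMonoidHom.mul.compr₂ D - AddMonoidHom.mul.comp D - AddMonoidHom.mul.compl₂ D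

lemma leibnizDefect_apply (D : R →+ R) (x y : R) :
    leibnizDefect D x y = D (x * y) - D x * y - x * D y := rfl

namespace IsJordanLeibniz

variable {D : R →+ R}

lemma map_mul_add_mul_swap (hD : IsJordanLeibniz D) (x y : R) :
    D (x * y) + D (y * x) = D x * y + x * D y + D y * x + y * D x := by
  have h := hD (x + y)
  simp only [add_mul, mul_add, map_add, hD x, hD y] at h
  grind

lemma map_mul_mul_self (hD : IsJordanLeibniz D) (h2 : IsSMulRegular R 2) (x y : R) :
    D (x * y * x) = D x * y * x + x * D y * x + x * y * D x := by
  apply h2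
  have h := hD.map_mul_add_mul_swap x (x * y + y * x)
  have hsq := hD.map_mul_add_mul_swap (x * x) y
  rw [map_add D (x * y), hD.map_mul_add_mul_swap x y] at h
  simp only [mul_add, add_mul, map_add, ← mul_assoc, hD x] at h hsq
  simp only [two_smul]
  grind

lemma map_mul_mul_add_mul_mul_swap (hD : IsJordanLeibniz D) (h2 : IsSMulRegular R 2)
    (x y z : R) : D (x * y * z) + D (z * y * x) =
      D x * y * z + x * D y * z + x * y * D z + (D z * y * x + z * D y * x + z * y * D x) := by
  have h := hD.map_mul_mul_self h2 (x + z) y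
  simp only [add_mul, mul_add, map_add, hD.map_mul_mul_self h2] at h
  grind

lemma leibnizDefect_swap (hD : IsJordanLeibniz D) (x y : R) :
    leibnizDefect D y x = -leibnizDefect D x y := by
  simp only [leibnizDefect_apply, eq_sub_of_add_eq' (hD.map_mul_add_mul_swap x y)]
  abel

/-- Both ways of expanding `D (a b x b a + b a x a b)`. -/
lemma leibnizDefect_mul_commutator_add (hD : IsJordanLeibniz D) (h2 : IsSMulRegular R 2)
    (a b x : R) : leibnizDefect D a b * x * commutatorHom R a b +
      commutatorHom R a b * x * leibnizDefect D a b = 0 := by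
  have outer := hD.map_mul_mul_add_mul_mul_swap h2 (a * b) x (b * a)
  have inner_ab := hD.map_mul_mul_self h2 a (b * x * b)
  have inner_ba := hD.map_mul_mul_self h2 b (a * x * a)
  rw [hD.map_mul_mul_self h2 b x] at inner_ab
  rw [hD.map_mul_mul_self h2 a x] at inner_ba
  have hba := eq_sub_of_add_eq' (hD.map_mul_add_mul_swap a b)
  simp only [← mul_assoc] at outer inner_ab inner_ba
  rw [inner_ab, inner_ba, hba] at outer
  rw [leibnizDefect_apply, commutatorHom_apply, ← sub_eq_zero.mpr outer]
  noncomm_ring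

lemma leibnizDefect_mul_mul_commutator (hD : IsJordanLeibniz D) (hR : IsSemiprimeRing R)
    (h2 : IsSMulRegular R 2) (a b x c d : R) :
    leibnizDefect D a b * x * commutatorHom R c d = 0 := by
  have diag (a b x : R) : leibnizDefect D a b * x * commutatorHom R a b = 0 :=
    hR.mul_mul_eq_zero_of_add_swap h2 (hD.leibnizDefect_mul_commutator_add h2 a b) x
  have half_diag (a b c x : R) : leibnizDefect D a b * x * commutatorHom R c b = 0 :=
    hR.mul_mul_eq_zero_of_diagonal ((leibnizDefect D).flip b) ((commutatorHom R).flip b)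
      (fun s x => diag s b x) a c x
  exact hR.mul_mul_eq_zero_of_diagonal (leibnizDefect D a) (commutatorHom R c)
    (fun s x => half_diag a s c x) b d x

lemma commute_leibnizDefect (hD : IsJordanLeibniz D) (hR : IsSemiprimeRing R)
    (h2 : IsSMulRegular R 2) (a b y : R) : Commute (leibnizDefect D a b) y := by
  have ann := hD.leibnizDefect_mul_mul_commutator hR h2 a b
  simp only [commutatorHom_apply] at ann
  refine sub_eq_zero.mp (hR _ fun x => ?_)
  set e := leibnizDefect D a b
  calc (e * y - y * e) * x * (e * y - y * e)
      = e * (y * x) * (e * y - y * e) - y * (e * x * (e * y - y * e)) := by noncomm_ring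
    _ = 0 := by rw [ann, ann, mul_zero, sub_zero]

/-- The central element `e = leibnizDefect D a b` annihilates every commutator, in particular
`w = ab - ba`; since `2e ≡ D w` modulo commutators, applying `D` to `ew + we = 0` gives
`2e³ = 0`. -/
lemma leibnizDefect_cube_eq_zero (hD : IsJordanLeibniz D) (hR : IsSemiprimeRing R)
    (h2 : IsSMulRegular R 2) (a b : R) :
    leibnizDefect D a b * leibnizDefect D a b * leibnizDefect D a b = 0 := by
  have central := hD.commute_leibnizDefect hR h2 a b
  have ann (c d : R) : leibnizDefect D a b * (c * d - d * c) = 0 := by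
    simpa only [commutatorHom_apply, mul_one] using
      hD.leibnizDefect_mul_mul_commutator hR h2 a b 1 c d
  have two_e : leibnizDefect D a b + leibnizDefect D a b =
      D (a * b - b * a) - (D a * b - b * D a) - (a * D b - D b * a) := by
    nth_rewrite 2 [← neg_neg (leibnizDefect D a b)]
    rw [← hD.leibnizDefect_swap a b, leibnizDefect_apply, leibnizDefect_apply, map_sub]
    abel
  set e := leibnizDefect D a b
  set w := a * b - b * a
  have two_sq : e * e + e * e = e * D w := by
    rw [← mul_add, two_e, mul_sub, mul_sub, ann, ann, sub_zero, sub_zero]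
  have ew : e * w = 0 := ann a b
  have we : w * e = 0 := by rw [← (central w).eq, ew]
  have sq_Dw : e * (e * D w) + e * (e * D w) = 0 := by
    have e_De_w : e * (D e * w) = 0 := by rw [(central (D e)).left_comm, ew, mul_zero]
    have e_w_De : e * (w * D e) = 0 := by rw [← mul_assoc, ew, zero_mul]
    have h := congrArg (e * ·) (hD.map_mul_add_mul_swap e w)
    simp only [ew, we, map_zero, mul_zero, mul_add, e_De_w, e_w_De, ← (central (D w)).eq] at h
    simpa only [zero_add, add_zero] using h.symm
  have h : e * (e * D w) = 0 := h2 (by simpa only [two_smul, smul_zero] using sq_Dw)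
  apply h2
  simpa only [two_smul, smul_zero, ← two_sq, mul_add, ← mul_assoc] using h

theorem isLeibniz (hD : IsJordanLeibniz D) (hR : IsSemiprimeRing R) (h2 : IsSMulRegular R 2) :
    IsLeibniz D := fun a b => by
  have h : leibnizDefect D a b = 0 := hR.eq_zero_of_central_of_cube_eq_zero
    (hD.commute_leibnizDefect hR h2 a b) (hD.leibnizDefect_cube_eq_zero hR h2 a b)
  rwa [leibnizDefect_apply, sub_sub, sub_eq_zero] at h

end IsJordanLeibniz
end Semiprime

/-! ### Boundedness of derivations of C⋆-algebras -/

namespace IsLeibniz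

lemma map_one {R : Type*} [Ring R] {D : R → R} (hD : IsLeibniz D) : D 1 = 0 := by
  simpa using hD 1 1

lemma map_algebraMap {R 𝕜 : Type*} [CommSemiring 𝕜] [Ring R] [Algebra 𝕜 R] {D : R →ₗ[𝕜] R}
    (hD : IsLeibniz D) (c : 𝕜) : D (algebraMap 𝕜 R c) = 0 := by
  rw [Algebra.algebraMap_eq_smul_one, map_smul, hD.map_one, smul_zero]

lemma smul {R 𝕜 : Type*} [Ring R] [CommRing 𝕜] [Algebra 𝕜 R] {D : R → R} (hD : IsLeibniz D)
    (c : 𝕜) : IsLeibniz (c • D) := fun x y => by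
  simp only [Pi.smul_apply, hD x y, smul_add, smul_mul_assoc, mul_smul_comm]

lemma add {R : Type*} [Ring R] {D E : R → R} (hD : IsLeibniz D) (hE : IsLeibniz E) :
    IsLeibniz (D + E) := fun x y => by
  simp only [Pi.add_apply, hD x y, hE x y]
  noncomm_ring

end IsLeibniz

section Continuity

variable {A : Type*} [CStarAlgebra A]

lemma exists_norm_mul_le_of_zero_mem_spectrum {c : A} (hc : IsSelfAdjoint c)
    (h0 : (0 : ℝ) ∈ spectrum ℝ c) {ε : ℝ} (hε : 0 < ε) :
    ∃ p : A, ‖p‖ ≤ 1 ∧ 1 ≤ ‖p * p‖ ∧ ‖p * c‖ ≤ ε ∧ ‖c * p‖ ≤ ε := by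
  let f (x : ℝ) : ℝ := max 0 (1 - |x| / ε)
  have hf : Continuous f := by fun_prop
  have f_nonneg (x : ℝ) : 0 ≤ f x := le_max_left _ _
  have f_le_one (x : ℝ) : f x ≤ 1 := max_le zero_le_one (sub_le_self _ (by positivity))
  have f_mul_le (x : ℝ) : ‖f x * x‖ ≤ ε := by
    rw [norm_mul, Real.norm_of_nonneg (f_nonneg x), Real.norm_eq_abs]
    rcases le_total |x| ε with hx | hx
    · exact (mul_le_of_le_one_left (abs_nonneg x) (f_le_one x)).trans hx
    · have f_zero : f x = 0 := max_eq_left (sub_nonpos.mpr ((one_le_div hε).mpr hx))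
      rw [f_zero, zero_mul]
      exact hε.le
  have p_mul : cfc f c * c = cfc (fun x => f x * x) c := by
    rw [cfc_mul f (fun x => x) c, cfc_id' ℝ c]
  have p_mul_norm : ‖cfc f c * c‖ ≤ ε := by
    rw [p_mul]
    exact norm_cfc_le hε.le fun x _ => f_mul_le x
  refine ⟨cfc f c, ?_, ?_, p_mul_norm, ?_⟩
  · refine norm_cfc_le zero_le_one fun x _ => ?_
    rw [Real.norm_of_nonneg (f_nonneg x)]
    exact f_le_one x
  · rw [← cfc_mul f f c]
    simpa [f] using norm_apply_le_norm_cfc (fun x => f x * f x) c h0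
  · rwa [← ((Commute.refl c).cfc_real f).eq]

open Filter Topology in
lemma abs_le_norm_algebraMap_add_mul_add_mul {c : A} (hc : IsSelfAdjoint c)
    (h0 : (0 : ℝ) ∈ spectrum ℝ c) (r : ℝ) (P Q : A) :
    |r| ≤ ‖algebraMap ℝ A r + (P * c + c * Q)‖ := by
  set y := algebraMap ℝ A r + (P * c + c * Q) with hy
  have approx (ε : ℝ) (hε : 0 < ε) : |r| ≤ ‖y‖ + (‖P‖ * ε + ε * ‖Q‖) := by
    obtain ⟨p, p_norm, pp_norm, pc_norm, cp_norm⟩ :=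
      exists_norm_mul_le_of_zero_mem_spectrum hc h0 hε
    have sandwich_norm (x : A) : ‖p * x * p‖ ≤ ‖x‖ := by
      calc ‖p * x * p‖ ≤ ‖p‖ * ‖x‖ * ‖p‖ := norm_mul₃_le
        _ ≤ 1 * ‖x‖ * 1 := by gcongr
        _ = ‖x‖ := by ring
    have sandwich : r • (p * p) = p * y * p - (p * P * (c * p) + p * c * (Q * p)) := by
      rw [hy, Algebra.algebraMap_eq_smul_one]
      simp only [mul_add, add_mul, mul_smul_comm, smul_mul_assoc, mul_one, mul_assoc]
      abel
    calc |r| ≤ |r| * ‖p * p‖ := le_mul_of_one_le_right (abs_nonneg r) pp_norm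
      _ = ‖p * y * p - (p * P * (c * p) + p * c * (Q * p))‖ := by
        rw [← sandwich, norm_smul, Real.norm_eq_abs]
      _ ≤ ‖p * y * p‖ + (‖p * P * (c * p)‖ + ‖p * c * (Q * p)‖) :=
        (norm_sub_le _ _).trans (by gcongr; exact norm_add_le _ _)
      _ ≤ ‖y‖ + (1 * ‖P‖ * ε + ε * (‖Q‖ * 1)) :=
        add_le_add (sandwich_norm y) (add_le_add
          (norm_mul_le_of_le (norm_mul_le_of_le p_norm le_rfl) cp_norm)
          (norm_mul_le_of_le pc_norm (norm_mul_le_of_le le_rfl p_norm)))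
      _ = ‖y‖ + (‖P‖ * ε + ε * ‖Q‖) := by ring
  have lim : Tendsto (fun ε : ℝ => ‖y‖ + (‖P‖ * ε + ε * ‖Q‖)) (𝓝[>] 0) (𝓝 ‖y‖) :=
    (Continuous.tendsto' (by fun_prop) 0 _ (by simp)).mono_left nhdsWithin_le_nhds
  exact ge_of_tendsto lim (eventually_mem_nhdsWithin.mono approx)

section Order

variable [PartialOrder A] [StarOrderedRing A]

/-- With `c = √(‖a‖ - a)`, which is not invertible, `a + D a = ‖a‖ - (c + D c) * c - c * D c`. -/
lemma IsLeibniz.norm_le_norm_add {D : A →ₗ[ℝ] A} (hD : IsLeibniz D) {a : A} (ha : 0 ≤ a) :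
    ‖a‖ ≤ ‖a + D a‖ := by
  nontriviality A
  set r := algebraMap ℝ A ‖a‖
  have hb : 0 ≤ r - a := sub_nonneg.mpr ha.isSelfAdjoint.le_algebraMap_norm_self
  set c := CFC.sqrt (r - a)
  have c_sq : c * c = r - a := CFC.sqrt_mul_sqrt_self (r - a) hb
  have hc : IsSelfAdjoint c := (CFC.sqrt_nonneg (r - a)).isSelfAdjoint
  have h0 : (0 : ℝ) ∈ spectrum ℝ c := (spectrum.zero_mem_iff ℝ).mpr fun c_unit =>
    spectrum.mem_iff.mp (CStarAlgebra.norm_mem_spectrum_of_nonneg ha)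
      (c_sq ▸ c_unit.mul c_unit)
  have D_a : D a = -(D c * c + c * D c) := by
    rw [← hD, c_sq, map_sub, hD.map_algebraMap, zero_sub, neg_neg]
  have a_add : a + D a = r + (-(c + D c) * c + c * -D c) := by
    rw [D_a, eq_sub_of_add_eq' (eq_sub_iff_add_eq.mp c_sq)]
    noncomm_ring
  rw [a_add]
  simpa only [abs_norm] using abs_le_norm_algebraMap_add_mul_add_mul hc h0 ‖a‖ (-(c + D c)) (-D c)

open Filter Topology in
/-- For `r = ‖z‖ + 1` and small `t > 0`, `norm_le_norm_add` applied to the derivation `-t • D` and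
the element `x n + t • (z + r)` bounds `‖z + r‖` by `‖r‖` up to an error of order `t`. -/
lemma IsLeibniz.nonpos_of_tendsto {D : A →ₗ[ℝ] A} (hD : IsLeibniz D) {x : ℕ → A} {z : A}
    (hx : ∀ n, IsSelfAdjoint (x n)) (hz : IsSelfAdjoint z) (hx0 : Tendsto x atTop (𝓝 0))
    (hDx : Tendsto (fun n => D (x n)) atTop (𝓝 z)) : z ≤ 0 := by
  nontriviality A
  set r := algebraMap ℝ A (‖z‖ + 1) with hr
  have one_le : 1 ≤ z + r := by
    have h := hz.neg_algebraMap_norm_le_self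
    rw [hr, map_add, RingHom.map_one, ← add_assoc]
    exact le_add_of_nonneg_left (neg_le_iff_add_nonneg.mp h)
  have eventually_nonneg {t : ℝ} (ht : 0 < t) : ∀ᶠ n in atTop, 0 ≤ x n + t • (z + r) := by
    have x_small : ∀ᶠ n in atTop, ‖x n‖ < t := hx0.norm.eventually_lt_const (by simpa using ht)
    filter_upwards [x_small] with n hn
    calc (0 : A) ≤ x n + algebraMap ℝ A ‖x n‖ :=
          neg_le_iff_add_nonneg.mp (hx n).neg_algebraMap_norm_le_self
      _ ≤ x n + algebraMap ℝ A t := by gcongr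
      _ ≤ x n + t • (z + r) := by
        rw [Algebra.algebraMap_eq_smul_one]
        gcongr
  have bound {t : ℝ} (ht : 0 < t) : ‖z + r‖ ≤ ‖r - t • D z‖ := by
    have dissip : ∀ᶠ n in atTop,
        ‖x n + t • (z + r)‖ ≤ ‖x n + t • (z + r) + -t • D (x n + t • (z + r))‖ :=
      (eventually_nonneg ht).mono fun n hn => (hD.smul (-t)).norm_le_norm_add (D := -t • D) hn
    have limit : ‖0 + t • (z + r)‖ ≤ ‖0 + t • (z + r) + -t • (z + t • D z)‖ := by
      have D_r : D r = 0 := hD.map_algebraMap _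
      simp only [map_add, map_smul, D_r, add_zero] at dissip
      exact le_of_tendsto_of_tendsto (hx0.add_const _).norm
        ((hx0.add_const _).add ((hDx.add_const _).const_smul (-t))).norm dissip
    have factor : t • (z + r) + -t • (z + t • D z) = t • (r - t • D z) := by module
    rw [zero_add, factor, norm_smul, norm_smul] at limit
    exact le_of_mul_le_mul_left limit (norm_pos_iff.mpr ht.ne')
  have lim : Tendsto (fun t : ℝ => ‖r - t • D z‖) (𝓝[>] 0) (𝓝 ‖r‖) :=
    (Continuous.tendsto' (by fun_prop) 0 _ (by simp)).mono_left nhdsWithin_le_nhds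
  have norm_le : ‖z + r‖ ≤ ‖z‖ + 1 := by
    have h := ge_of_tendsto lim (eventually_mem_nhdsWithin.mono fun t ht => bound ht)
    rwa [hr, norm_algebraMap', Real.norm_of_nonneg (by positivity)] at h
  have z_add_r_le : z + r ≤ r :=
    (hz.add (.algebraMap A (.all _))).le_algebraMap_norm_self.trans (algebraMap_mono A norm_le)
  exact add_le_iff_nonpos_left.mp z_add_r_le

end Order

open Filter Topology in
lemma IsLeibniz.continuous_of_map_star {D : A →ₗ[ℂ] A} (hD : IsLeibniz D)
    (D_star : ∀ x, D (star x) = star (D x)) : Continuous D := by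
  let _ := CStarAlgebra.spectralOrder A
  let _ := CStarAlgebra.spectralOrderedRing A
  have add_star_nonpos {x : ℕ → A} {z : A} (hx : Tendsto x atTop (𝓝 0))
      (hDx : Tendsto (fun n => D (x n)) atTop (𝓝 z)) : z + star z ≤ 0 :=
    IsLeibniz.nonpos_of_tendsto (D := D.restrictScalars ℝ) (x := fun n => x n + star (x n)) hD
      (fun n => .add_star_self (x n)) (.add_star_self z) (by simpa using hx.add hx.star)
      (by simpa [D_star] using hDx.add hDx.star)
  have add_star_eq_zero {x : ℕ → A} {z : A} (hx : Tendsto x atTop (𝓝 0))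
      (hDx : Tendsto (fun n => D (x n)) atTop (𝓝 z)) : z + star z = 0 := by
    refine (add_star_nonpos hx hDx).antisymm (neg_nonpos.mp ?_)
    have h := add_star_nonpos (x := fun n => -x n) (z := -z) (by simpa using hx.neg)
      (by simpa using hDx.neg)
    rwa [star_neg, ← neg_add] at h
  refine D.continuous_of_seq_closed_graph fun x a b hx hDx => ?_
  set z := b - D a
  have hx0 : Tendsto (fun n => x n - a) atTop (𝓝 0) := by simpa using hx.sub_const a
  have hDx0 : Tendsto (fun n => D (x n - a)) atTop (𝓝 z) := by
    simpa only [map_sub, Function.comp_apply] using hDx.sub_const (D a)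
  have h_re : z + star z = 0 := add_star_eq_zero hx0 hDx0
  have h_im : Complex.I • z + star (Complex.I • z) = 0 := add_star_eq_zero
    (by simpa using hx0.const_smul Complex.I) (by simpa using hDx0.const_smul Complex.I)
  have h_sub : z - star z = 0 := by
    simpa [← sub_eq_add_neg, ← smul_sub] using h_im
  have z_eq : z = (2⁻¹ : ℂ) • ((z + star z) + (z - star z)) := by module
  rw [h_re, h_sub, add_zero, smul_zero] at z_eq
  exact sub_eq_zero.mp z_eq

/-- Mathlib's intrinsic star `x ↦ (D x⋆)⋆` of a linear map, without its `WithConv` wrapper; it turns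
derivations into derivations. -/
noncomputable def starConj (D : A →ₗ[ℂ] A) : A →ₗ[ℂ] A :=
  (star (WithConv.toConv D)).ofConv

lemma starConj_apply (D : A →ₗ[ℂ] A) (x : A) : starConj D x = star (D (star x)) := rfl

lemma IsLeibniz.isLeibniz_starConj {D : A →ₗ[ℂ] A} (hD : IsLeibniz D) : IsLeibniz (starConj D) :=
  fun x y => by
    simp only [starConj_apply, star_mul, hD (star y), star_add, star_star]
    rw [add_comm]

lemma IsLeibniz.continuous_add_starConj {D : A →ₗ[ℂ] A} (hD : IsLeibniz D) :
    Continuous (D + starConj D) :=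
  IsLeibniz.continuous_of_map_star (hD.add hD.isLeibniz_starConj) fun x => by
    simp only [LinearMap.add_apply, starConj_apply, star_add, star_star, add_comm]

theorem IsLeibniz.continuous {D : A →ₗ[ℂ] A} (hD : IsLeibniz D) : Continuous D := by
  have h_re := hD.continuous_add_starConj
  have h_im := IsLeibniz.continuous_add_starConj (D := Complex.I • D) (hD.smul Complex.I)
  have decomp (x : A) : D x = (2⁻¹ : ℂ) • ((D + starConj D) x -
      Complex.I • (Complex.I • D + starConj (Complex.I • D)) x) := by
    simp only [LinearMap.add_apply, LinearMap.smul_apply, starConj_apply, star_smul,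
      RCLike.star_def, Complex.conj_I, smul_add, smul_smul, mul_neg, Complex.I_mul_I]
    module
  rw [funext decomp]
  exact (h_re.sub (h_im.const_smul Complex.I)).const_smul (2⁻¹ : ℂ)

end Continuity

/-! ### Traces and their definition ideals -/

theorem exists_linearMap_extend_of_cone {V : Type*} [AddCommGroup V] [Module ℝ V]
    {C : Submodule ℝ≥0 V} (t : C →ₗ[ℝ≥0] ℝ) : ∃ ψ : V →ₗ[ℝ] ℝ, ∀ x : C, ψ x = t x := by
  let G : Submodule ℝ (V × ℝ) :=
    { carrier := {p | ∃ x y : C, p = ((x : V) - y, t x - t y)}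
      zero_mem' := ⟨0, 0, by simp only [sub_self, Prod.mk_zero_zero]⟩
      add_mem' := by
        rintro _ _ ⟨x, y, rfl⟩ ⟨x', y', rfl⟩
        refine ⟨x + x', y + y', ?_⟩
        simp only [Prod.mk_add_mk, Submodule.coe_add, map_add, add_sub_add_comm]
      smul_mem' := by
        rintro c _ ⟨x, y, rfl⟩
        rcases le_total 0 c with hc | hc
        · lift c to ℝ≥0 using hc
          exact ⟨c • x, c • y, by simp [smul_sub, mul_sub, NNReal.smul_def]⟩
        · obtain ⟨c, rfl⟩ : ∃ d : ℝ≥0, c = -d := ⟨(-c).toNNReal, by simp [hc]⟩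
          exact ⟨c • y, c • x, by simp [smul_sub, mul_sub, NNReal.smul_def]⟩ }
  have single_valued : ∀ p ∈ G, p.1 = 0 → p.2 = 0 := by
    rintro _ ⟨x, y, rfl⟩ hxy
    have x_eq : x = y := Subtype.ext (sub_eq_zero.mp hxy)
    exact sub_eq_zero.mpr (congrArg t x_eq)
  have extends_t (x : C) : ((x : V), t x) ∈ G.toLinearPMap.graph := by
    rw [Submodule.toLinearPMap_graph_eq _ single_valued]
    exact ⟨x, 0, by simp⟩
  obtain ⟨ψ, hψ⟩ := G.toLinearPMap.toFun.exists_extend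
  refine ⟨ψ, fun x => ?_⟩
  obtain ⟨x', hx', htx⟩ := (LinearPMap.mem_graph_iff _).mp (extends_t x)
  calc ψ x = ψ x' := by rw [hx']
    _ = G.toLinearPMap x' := LinearMap.congr_fun hψ x'
    _ = t x := htx

section Polarization

variable {A : Type*} [Ring A] [StarRing A] [Algebra ℂ A] [StarModule ℂ A]

open Complex in
lemma star_mul_eq_polarization (x y : A) : star y * x = (4⁻¹ : ℂ) •
    (star (x + y) * (x + y) - star (x - y) * (x - y) +
      I • (star (x + I • y) * (x + I • y)) - I • (star (x - I • y) * (x - I • y))) := by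
  simp only [star_add, star_sub, star_smul, RCLike.star_def, conj_I, add_mul, mul_add, sub_mul,
    mul_sub, smul_mul_assoc, mul_smul_comm, smul_add, smul_sub, smul_smul]
  simp only [mul_neg, I_mul_I, neg_smul, neg_neg]
  module

end Polarization

section Trace

variable {A : Type*} [CStarAlgebra A] [PartialOrder A] {τ : A → ℝ≥0∞}

/-- A trace on the positive cone of a C⋆-algebra, encoded as a function on the whole algebra whose
values off the cone are irrelevant. -/
structure IsTracialWeight (τ : A → ℝ≥0∞) : Prop where
  apply_add : ∀ {x y : A}, 0 ≤ x → 0 ≤ y → τ (x + y) = τ x + τ y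
  apply_smul : ∀ (c : ℝ≥0) {x : A}, 0 ≤ x → τ (c • x) = c * τ x
  apply_mul_star_self : ∀ x : A, τ (x * star x) = τ (star x * x)

/-- Faithfulness and semifiniteness of a trace on the positive cone of a C⋆-algebra. -/
structure IsFaithfulSemifiniteTrace (τ : A → ℝ≥0∞) : Prop extends IsTracialWeight τ where
  eq_zero_of_apply_eq_zero : ∀ {x : A}, 0 ≤ x → τ x = 0 → x = 0
  exists_le_apply_lt_top : ∀ {x : A}, 0 ≤ x → x ≠ 0 → ∃ y, 0 ≤ y ∧ y ≠ 0 ∧ y ≤ x ∧ τ y < ∞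

namespace IsTracialWeight

lemma apply_zero (hτ : IsTracialWeight τ) : τ 0 = 0 := by
  simpa using hτ.apply_smul 0 le_rfl

lemma smul_lt_top (hτ : IsTracialWeight τ) (c : ℝ≥0) {x : A} (hx : 0 ≤ x) (h : τ x < ∞) :
    τ (c • x) < ∞ := by
  rw [hτ.apply_smul c hx]
  exact ENNReal.mul_lt_top ENNReal.coe_lt_top h

variable [StarOrderedRing A]

lemma mono (hτ : IsTracialWeight τ) {x y : A} (hx : 0 ≤ x) (hxy : x ≤ y) : τ x ≤ τ y := by
  rw [← add_sub_cancel x y, hτ.apply_add hx (sub_nonneg.mpr hxy)]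
  exact le_self_add

lemma lt_top_of_le_smul (hτ : IsTracialWeight τ) (c : ℝ≥0) {x y : A} (hx : 0 ≤ x) (hy : 0 ≤ y)
    (hxy : x ≤ c • y) (h : τ y < ∞) : τ x < ∞ :=
  (hτ.mono hx hxy).trans_lt (hτ.smul_lt_top c hy h)

lemma apply_star_mul_self_lt_top (hτ : IsTracialWeight τ) (a : A) {x : A}
    (hx : τ (star x * x) < ∞) : τ (star (a * x) * (a * x)) < ∞ := by
  refine hτ.lt_top_of_le_smul ‖star a * a‖₊ (star_mul_self_nonneg _) (star_mul_self_nonneg x) ?_ hx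
  rw [star_mul, mul_assoc, ← mul_assoc (star a), ← mul_assoc]
  exact CStarAlgebra.star_left_conjugate_le_norm_smul (.star_mul_self a)

/-- The ideal `n_τ` of elements `x` with `τ (x⋆x) < ∞`. -/
def squareFinite (hτ : IsTracialWeight τ) : Submodule ℂ A where
  carrier := {x | τ (star x * x) < ∞}
  zero_mem' := by simp [hτ.apply_zero]
  add_mem' {x y} hx hy := by
    have parallelogram : star (x + y) * (x + y) + star (x - y) * (x - y) =
        (2 : ℝ≥0) • (star x * x + star y * y) := by
      rw [ofNat_smul_eq_nsmul, two_nsmul]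
      simp only [star_add, star_sub]
      noncomm_ring
    refine hτ.lt_top_of_le_smul 2 (star_mul_self_nonneg _)
      (add_nonneg (star_mul_self_nonneg x) (star_mul_self_nonneg y))
      (le_of_le_of_eq (le_add_of_nonneg_right (star_mul_self_nonneg (x - y))) parallelogram) ?_
    rw [hτ.apply_add (star_mul_self_nonneg x) (star_mul_self_nonneg y)]
    exact ENNReal.add_lt_top.mpr ⟨hx, hy⟩
  smul_mem' c x hx := by
    rw [← smul_one_mul c x]
    exact hτ.apply_star_mul_self_lt_top (c • 1) hx

lemma mem_squareFinite (hτ : IsTracialWeight τ) {x : A} :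
    x ∈ hτ.squareFinite ↔ τ (star x * x) < ∞ := Iff.rfl

lemma star_mem_squareFinite (hτ : IsTracialWeight τ) {x : A} (hx : x ∈ hτ.squareFinite) :
    star x ∈ hτ.squareFinite := by
  rw [mem_squareFinite] at hx ⊢
  rwa [star_star, hτ.apply_mul_star_self]

lemma mul_mem_squareFinite_left (hτ : IsTracialWeight τ) (a : A) {x : A}
    (hx : x ∈ hτ.squareFinite) : a * x ∈ hτ.squareFinite :=
  hτ.apply_star_mul_self_lt_top a hx

lemma mul_mem_squareFinite_right (hτ : IsTracialWeight τ) {x : A} (hx : x ∈ hτ.squareFinite)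
    (a : A) : x * a ∈ hτ.squareFinite := by
  simpa using hτ.star_mem_squareFinite
    (hτ.mul_mem_squareFinite_left (star a) (hτ.star_mem_squareFinite hx))

/-- The definition ideal `m_τ = n_τ n_τ` of a trace. -/
noncomputable def definitionIdeal (hτ : IsTracialWeight τ) : Submodule ℂ A :=
  hτ.squareFinite * hτ.squareFinite

lemma mul_mem_definitionIdeal_left (hτ : IsTracialWeight τ) (a : A) {w : A}
    (hw : w ∈ hτ.definitionIdeal) : a * w ∈ hτ.definitionIdeal := by
  induction hw using Submodule.mul_induction_on' with
  | mem_mul_mem x hx y hy =>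
    rw [← mul_assoc]
    exact Submodule.mul_mem_mul (hτ.mul_mem_squareFinite_left a hx) hy
  | add v _ w _ hv hw =>
    rw [mul_add]
    exact add_mem hv hw

lemma star_mem_definitionIdeal (hτ : IsTracialWeight τ) {w : A}
    (hw : w ∈ hτ.definitionIdeal) : star w ∈ hτ.definitionIdeal := by
  induction hw using Submodule.mul_induction_on' with
  | mem_mul_mem x hx y hy =>
    rw [star_mul]
    exact Submodule.mul_mem_mul (hτ.star_mem_squareFinite hy) (hτ.star_mem_squareFinite hx)
  | add v _ w _ hv hw =>
    rw [star_add]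
    exact add_mem hv hw

lemma mul_mem_definitionIdeal_right (hτ : IsTracialWeight τ) {w : A}
    (hw : w ∈ hτ.definitionIdeal) (a : A) : w * a ∈ hτ.definitionIdeal := by
  simpa using hτ.star_mem_definitionIdeal
    (hτ.mul_mem_definitionIdeal_left (star a) (hτ.star_mem_definitionIdeal hw))

lemma definitionIdeal_le (hτ : IsTracialWeight τ) {p : Submodule ℂ A}
    (h : ∀ s ∈ hτ.squareFinite, star s * s ∈ p) : hτ.definitionIdeal ≤ p := by
  refine Submodule.mul_le.mpr fun y hy x hx => ?_
  have hy' := hτ.star_mem_squareFinite hy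
  rw [← star_star y, star_mul_eq_polarization]
  refine p.smul_mem _ (p.sub_mem (p.add_mem (p.sub_mem ?_ ?_) (p.smul_mem _ ?_)) (p.smul_mem _ ?_))
  · exact h _ (add_mem hx hy')
  · exact h _ (sub_mem hx hy')
  · exact h _ (add_mem hx (Submodule.smul_mem _ _ hy'))
  · exact h _ (sub_mem hx (Submodule.smul_mem _ _ hy'))

/-- A linear functional on the whole algebra which restricts to the trace on the cone of positive
elements of finite trace. -/
def IsExtension (τ : A → ℝ≥0∞) (φ : A →ₗ[ℂ] ℂ) : Prop :=
  ∀ x, 0 ≤ x → τ x < ∞ → φ x = (τ x).toReal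

open ComplexStarModule in
theorem exists_isExtension (hτ : IsTracialWeight τ) : ∃ φ : A →ₗ[ℂ] ℂ, IsExtension τ φ := by
  let C : Submodule ℝ≥0 A :=
    { carrier := {x | 0 ≤ x ∧ τ x < ∞}
      zero_mem' := by simp [hτ.apply_zero]
      add_mem' := fun hx hy => ⟨add_nonneg hx.1 hy.1, by
        rw [hτ.apply_add hx.1 hy.1]
        exact ENNReal.add_lt_top.mpr ⟨hx.2, hy.2⟩⟩
      smul_mem' := fun c x hx => ⟨smul_nonneg c.2 hx.1, hτ.smul_lt_top c hx.1 hx.2⟩ }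
  let t : C →ₗ[ℝ≥0] ℝ :=
    { toFun := fun x => (τ x).toReal
      map_add' := fun x y => by
        rw [Submodule.coe_add, hτ.apply_add x.2.1 y.2.1, ENNReal.toReal_add x.2.2.ne y.2.2.ne]
      map_smul' := fun c x => by
        rw [Submodule.coe_smul, hτ.apply_smul c x.2.1, ENNReal.toReal_mul]
        rfl }
  obtain ⟨ψ, hψ⟩ := exists_linearMap_extend_of_cone t
  let f : A →ₗ[ℝ] ℝ := ψ ∘ₗ (selfAdjoint.submodule ℝ A).subtype ∘ₗ realPart
  refine ⟨Module.Dual.extendRCLike (𝕜 := ℂ) f, fun x hx0 hx => ?_⟩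
  have f_x : f x = (τ x).toReal := by
    have re_x : (ℜ x : A) = x := hx0.isSelfAdjoint.coe_realPart
    exact (congrArg ψ re_x).trans (hψ ⟨x, hx0, hx⟩)
  have f_I_x : f (Complex.I • x) = 0 := by
    have re_I_x : (ℜ (Complex.I • x) : A) = 0 := by
      rw [realPart_I_smul, hx0.isSelfAdjoint.imaginaryPart, neg_zero, ZeroMemClass.coe_zero]
    exact (congrArg ψ re_I_x).trans (map_zero ψ)
  simp [Module.Dual.extendRCLike_apply, f_x, f_I_x]

namespace IsExtension

variable {φ : A →ₗ[ℂ] ℂ}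

lemma apply_star_mul_self (hφ : IsExtension τ φ) (hτ : IsTracialWeight τ) {x : A}
    (hx : x ∈ hτ.squareFinite) : φ (star x * x) = (τ (star x * x)).toReal :=
  hφ _ (star_mul_self_nonneg x) hx

lemma apply_star_mul_self_swap (hφ : IsExtension τ φ) (hτ : IsTracialWeight τ) {x : A}
    (hx : x ∈ hτ.squareFinite) : φ (star x * x) = φ (x * star x) := by
  have h := hφ.apply_star_mul_self hτ (hτ.star_mem_squareFinite hx)
  rw [star_star] at h
  rw [h, hφ.apply_star_mul_self hτ hx, hτ.apply_mul_star_self]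

lemma apply_mul_comm_of_mem_squareFinite (hφ : IsExtension τ φ) (hτ : IsTracialWeight τ) {x y : A}
    (hx : x ∈ hτ.squareFinite) (hy : y ∈ hτ.squareFinite) : φ (x * y) = φ (y * x) := by
  have symm_part {x y : A} (hx : x ∈ hτ.squareFinite) (hy : y ∈ hτ.squareFinite) :
      φ (star x * y) + φ (star y * x) = φ (y * star x) + φ (x * star y) := by
    have h := hφ.apply_star_mul_self_swap hτ (add_mem hx hy)
    simp only [star_add, add_mul, mul_add, map_add, hφ.apply_star_mul_self_swap hτ hx,
      hφ.apply_star_mul_self_swap hτ hy] at h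
    linear_combination h
  have hx' := hτ.star_mem_squareFinite hx
  have h_one := symm_part hx' hy
  have h_I := symm_part hx' (Submodule.smul_mem _ Complex.I hy)
  simp only [star_smul, smul_mul_assoc, mul_smul_comm, map_smul, star_star, RCLike.star_def,
    Complex.conj_I, smul_eq_mul] at h_one h_I
  linear_combination h_one / 2 - Complex.I / 2 * h_I +
    (φ (x * y) - φ (y * x) - φ (star y * star x) + φ (star x * star y)) / 2 * Complex.I_mul_I

lemma apply_mul_comm (hφ : IsExtension τ φ) (hτ : IsTracialWeight τ) {w : A}
    (hw : w ∈ hτ.definitionIdeal) (a : A) : φ (w * a) = φ (a * w) := by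
  induction hw using Submodule.mul_induction_on' with
  | mem_mul_mem x hx y hy =>
    calc φ (x * y * a) = φ (x * (y * a)) := by rw [mul_assoc]
      _ = φ (y * (a * x)) := by
        rw [hφ.apply_mul_comm_of_mem_squareFinite hτ hx (hτ.mul_mem_squareFinite_right hy a),
          mul_assoc]
      _ = φ (a * (x * y)) := by
        rw [hφ.apply_mul_comm_of_mem_squareFinite hτ hy (hτ.mul_mem_squareFinite_left a hx),
          mul_assoc]
  | add v _ w _ hv hw => rw [add_mul, mul_add, map_add, map_add, hv, hw]

open ComplexOrder in
/-- For `s ∈ n_τ`, the functional `x ↦ φ (s⋆s x) = φ (s x s⋆)` is positive, hence continuous. -/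
lemma continuous_star_mul_self_mul (hφ : IsExtension τ φ) (hτ : IsTracialWeight τ) {s : A}
    (hs : s ∈ hτ.squareFinite) : Continuous fun x => φ (star s * s * x) := by
  have hs' := hτ.star_mem_squareFinite hs
  have rotate (x : A) : φ (star s * s * x) = φ (s * x * star s) := by
    rw [mul_assoc, hφ.apply_mul_comm_of_mem_squareFinite hτ hs'
      (hτ.mul_mem_squareFinite_right hs x)]
  have nonneg (x : A) (hx : 0 ≤ x) : 0 ≤ φ (star s * s * x) := by
    obtain ⟨y, rfl⟩ := CStarAlgebra.nonneg_iff_eq_star_mul_self.mp hx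
    have h := hφ.apply_star_mul_self hτ (hτ.mul_mem_squareFinite_left y hs')
    rw [star_mul, star_star, ← mul_assoc, mul_assoc s] at h
    rw [rotate, h]
    exact_mod_cast ENNReal.toReal_nonneg
  exact map_continuous (PositiveLinearMap.mk₀ (φ ∘ₗ LinearMap.mulLeft ℂ (star s * s)) nonneg)

lemma continuous_mul (hφ : IsExtension τ φ) (hτ : IsTracialWeight τ) {w : A}
    (hw : w ∈ hτ.definitionIdeal) : Continuous fun x => φ (w * x) := by
  let p : Submodule ℂ A :=
    { carrier := {w | Continuous fun x => φ (w * x)}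
      zero_mem' := by simpa using continuous_const
      add_mem' := fun hv hw => (Continuous.add hv hw).congr fun x => by
        simp only [Pi.add_apply, add_mul, map_add]
      smul_mem' := fun c w hw => (Continuous.const_smul hw c).congr fun x => by
        simp only [Pi.smul_apply, smul_mul_assoc, map_smul] }
  exact hτ.definitionIdeal_le (p := p) (fun s hs => hφ.continuous_star_mul_self_mul hτ hs) hw

end IsExtension

end IsTracialWeight
end Trace

/-! ### Traces of derivations -/

section TraceOfDerivation

variable {A : Type*} [CStarAlgebra A] [PartialOrder A] [StarOrderedRing A] {τ : A → ℝ≥0∞}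
  {φ : A →ₗ[ℂ] ℂ} {D : A →ₗ[ℂ] A}

namespace IsTracialWeight.IsExtension

lemma apply_mul_star_pow_mul_map_pow (hφ : IsExtension τ φ) (hτ : IsTracialWeight τ)
    (hD : IsLeibniz D) {w u : A} (hw : w ∈ hτ.definitionIdeal) (hu : u ∈ unitary A)
    (h : Commute w u) (n : ℕ) :
    φ (w * (star (u ^ n) * D (u ^ n))) = n * φ (w * (star u * D u)) := by
  have u_star : u * star u = 1 := Unitary.mul_star_self_of_mem hu
  induction n with
  | zero => simp [hD.map_one]
  | succ n ih =>
    have star_pow_mul : star (u ^ n) * u ^ n = 1 :=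
      Unitary.star_mul_self_of_mem (pow_mem hu n)
    have star_pow_succ : star (u ^ (n + 1)) = star u * star (u ^ n) := by rw [pow_succ, star_mul]
    have expand : w * (star (u ^ (n + 1)) * D (u ^ (n + 1))) =
        w * (star u * star (u ^ n) * D (u ^ n)) * u +
          w * (star u * (star (u ^ n) * u ^ n) * D u) := by
      rw [star_pow_succ, pow_succ, hD]
      noncomm_ring
    have rotate : u * (w * (star u * star (u ^ n) * D (u ^ n))) =
        w * (star (u ^ n) * D (u ^ n)) := by
      calc u * (w * (star u * star (u ^ n) * D (u ^ n)))
          = u * w * star u * (star (u ^ n) * D (u ^ n)) := by noncomm_ring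
        _ = w * (star (u ^ n) * D (u ^ n)) := by rw [← h.eq, mul_assoc w, u_star, mul_one]
    rw [expand, map_add, hφ.apply_mul_comm hτ (hτ.mul_mem_definitionIdeal_right hw _), rotate, ih,
      star_pow_mul, mul_one]
    push_cast
    ring

/-- The left-hand side of `apply_mul_star_pow_mul_map_pow` is bounded in `n`. -/
lemma apply_mul_star_mul_map_eq_zero_of_mem_unitary (hφ : IsExtension τ φ)
    (hτ : IsTracialWeight τ) (hD : IsLeibniz D) {w u : A} (hw : w ∈ hτ.definitionIdeal)
    (hu : u ∈ unitary A) (h : Commute w u) : φ (w * (star u * D u)) = 0 := by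
  let f : A →L[ℂ] ℂ := ⟨φ ∘ₗ LinearMap.mulLeft ℂ w, hφ.continuous_mul hτ hw⟩
  let D' : A →L[ℂ] A := ⟨D, hD.continuous⟩
  have unitary_norm {v : A} (hv : v ∈ unitary A) : ‖v‖ ≤ 1 := by
    nontriviality A
    exact (CStarRing.norm_of_mem_unitary hv).le
  have bound (n : ℕ) : n • ‖φ (w * (star u * D u))‖ ≤ ‖f‖ * (1 * (‖D'‖ * 1)) := by
    have hun : u ^ n ∈ unitary A := pow_mem hu n
    calc n • ‖φ (w * (star u * D u))‖ = ‖f (star (u ^ n) * D' (u ^ n))‖ := by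
          have h := congrArg norm (hφ.apply_mul_star_pow_mul_map_pow hτ hD hw hu h n)
          rw [norm_mul, Complex.norm_natCast] at h
          rw [nsmul_eq_mul, ← h]
          rfl
      _ ≤ ‖f‖ * (‖star (u ^ n)‖ * (‖D'‖ * ‖u ^ n‖)) :=
        f.le_opNorm_of_le (norm_mul_le_of_le le_rfl (D'.le_opNorm _))
      _ ≤ ‖f‖ * (1 * (‖D'‖ * 1)) := by
        gcongr
        · exact unitary_norm (Unitary.star_mem hun)
        · exact unitary_norm hun
  by_contra hne
  obtain ⟨n, hn⟩ := exists_lt_nsmul (norm_pos_iff.mpr hne) (‖f‖ * (1 * (‖D'‖ * 1)))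
  exact (bound n).not_gt hn

lemma apply_mul_map_eq_zero_of_mem_unitary (hφ : IsExtension τ φ) (hτ : IsTracialWeight τ)
    (hD : IsLeibniz D) {w u : A} (hw : w ∈ hτ.definitionIdeal) (hu : u ∈ unitary A)
    (h : Commute w u) : φ (w * D u) = 0 := by
  have cancel : w * u * (star u * D u) = w * D u := by
    rw [mul_assoc, ← mul_assoc u, Unitary.mul_star_self_of_mem hu, one_mul]
  rw [← cancel]
  exact hφ.apply_mul_star_mul_map_eq_zero_of_mem_unitary hτ hD
    (hτ.mul_mem_definitionIdeal_right hw u) hu (h.mul_left (Commute.refl u))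

/-- A self-adjoint contraction `z` is half the sum of the unitaries `z ± i√(1 - z²)`, which commute
with everything that commutes with `z`. -/
lemma apply_mul_map_eq_zero_of_isSelfAdjoint (hφ : IsExtension τ φ) (hτ : IsTracialWeight τ)
    (hD : IsLeibniz D) {w z : A} (hw : w ∈ hτ.definitionIdeal) (hz : IsSelfAdjoint z)
    (h : Commute w z) : φ (w * D z) = 0 := by
  wlog norm_le : ‖z‖ ≤ 1 generalizing z
  · have norm_ne : ‖z‖ ≠ 0 := by linarith
    have scaled := this (z := ‖z‖⁻¹ • z) ((IsSelfAdjoint.all _).smul hz) (h.smul_right _) (by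
      rw [norm_smul, norm_inv, norm_norm, inv_mul_cancel₀ norm_ne])
    rwa [D.map_smul_of_tower, mul_smul_comm, φ.map_smul_of_tower,
      smul_eq_zero_iff_right (inv_ne_zero norm_ne)] at scaled
  set s := CFC.sqrt (1 - z ^ 2)
  have hu : z + Complex.I • s ∈ unitary A :=
    hz.self_add_I_smul_cfcSqrt_sub_sq_mem_unitary z norm_le
  have hu' : z - Complex.I • s ∈ unitary A := by
    have hs : IsSelfAdjoint s := (CFC.sqrt_nonneg _).isSelfAdjoint
    simpa [hz.star_eq, hs.star_eq, ← sub_eq_add_neg] using Unitary.star_mem hu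
  have w_s : Commute w (Complex.I • s) :=
    (((Commute.one_right w).sub_right (h.pow_right 2)).symm.cfcₙ_nnreal _).symm.smul_right _
  have sum_eq_zero : φ (w * D ((z + Complex.I • s) + (z - Complex.I • s))) = 0 := by
    rw [map_add, mul_add, map_add,
      hφ.apply_mul_map_eq_zero_of_mem_unitary hτ hD hw hu (h.add_right w_s),
      hφ.apply_mul_map_eq_zero_of_mem_unitary hτ hD hw hu' (h.sub_right w_s), add_zero]
  rw [add_add_sub_cancel, map_add, mul_add, map_add, ← two_mul] at sum_eq_zero
  exact (mul_eq_zero.mp sum_eq_zero).resolve_left two_ne_zero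

/-- Linearization of `φ (z * D z) = 0`. -/
lemma apply_map_mul_eq_zero_of_isSelfAdjoint (hφ : IsExtension τ φ) (hτ : IsTracialWeight τ)
    (hD : IsLeibniz D) {x y : A} (hx : x ∈ hτ.definitionIdeal) (hy : y ∈ hτ.definitionIdeal)
    (hx' : IsSelfAdjoint x) (hy' : IsSelfAdjoint y) : φ (D (x * y)) = 0 := by
  have diag {z : A} (hz : z ∈ hτ.definitionIdeal) (hz' : IsSelfAdjoint z) : φ (z * D z) = 0 :=
    hφ.apply_mul_map_eq_zero_of_isSelfAdjoint hτ hD hz hz' (Commute.refl z)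
  have h := diag (add_mem hx hy) (hx'.add hy')
  simp only [map_add, add_mul, mul_add, diag hx hx', diag hy hy', zero_add, add_zero] at h
  rw [hD, map_add, ← hφ.apply_mul_comm hτ hy]
  exact h

theorem apply_map_mul_eq_zero (hφ : IsExtension τ φ) (hτ : IsTracialWeight τ)
    (hD : IsLeibniz D) {x y : A} (hx : x ∈ hτ.definitionIdeal) (hy : y ∈ hτ.definitionIdeal) :
    φ (D (x * y)) = 0 := by
  have square_mem {s : A} (hs : s ∈ hτ.squareFinite) : star s * s ∈ hτ.definitionIdeal :=
    Submodule.mul_mem_mul (hτ.star_mem_squareFinite hs) hs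
  have left_square (s : A) (hs : s ∈ hτ.squareFinite) : φ (D (star s * s * y)) = 0 := by
    let p := LinearMap.ker (φ ∘ₗ D ∘ₗ LinearMap.mulLeft ℂ (star s * s))
    exact hτ.definitionIdeal_le (p := p) (fun t ht =>
      hφ.apply_map_mul_eq_zero_of_isSelfAdjoint hτ hD (square_mem hs) (square_mem ht)
        (.star_mul_self s) (.star_mul_self t)) hy
  exact hτ.definitionIdeal_le
    (p := LinearMap.ker (φ ∘ₗ D ∘ₗ LinearMap.mulRight ℂ y)) left_square hx

lemma apply_map_mul_mul (hφ : IsExtension τ φ) (hτ : IsTracialWeight τ) (hD : IsLeibniz D) (a : A)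
    {x y : A} (hx : x ∈ hτ.definitionIdeal) (hy : y ∈ hτ.definitionIdeal) :
    φ (D a * (x * y)) = -φ (a * D (x * y)) := by
  have h := hφ.apply_map_mul_eq_zero hτ hD (hτ.mul_mem_definitionIdeal_left a hx) hy
  rw [mul_assoc, hD, map_add] at h
  exact eq_neg_of_add_eq_zero_left h

end IsTracialWeight.IsExtension

open IsTracialWeight

/-- For `0 ≠ y ≤ a⋆a` of finite trace, `φ (a y y a⋆) = τ (a y y a⋆)` vanishes, whence
`0 ≤ y³ ≤ y a⋆a y = 0`. -/
lemma IsFaithfulSemifiniteTrace.eq_zero_of_forall_apply_mul_eq_zero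
    (hτ : IsFaithfulSemifiniteTrace τ) (hφ : IsExtension τ φ) {a : A}
    (h : ∀ x ∈ hτ.definitionIdeal, ∀ y ∈ hτ.definitionIdeal, φ (a * (x * y)) = 0) : a = 0 := by
  by_contra ha
  obtain ⟨y, y_nonneg, y_ne, y_le, y_lt⟩ := hτ.exists_le_apply_lt_top (star_mul_self_nonneg a)
    (mt (CStarRing.star_mul_self_eq_zero_iff a).mp ha)
  have y_star : star y = y := y_nonneg.isSelfAdjoint.star_eq
  set s := CFC.sqrt y
  have s_star : star s = s := (CFC.sqrt_nonneg y).isSelfAdjoint.star_eq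
  have s_sq : s * s = y := CFC.sqrt_mul_sqrt_self y y_nonneg
  have hs : s ∈ hτ.squareFinite := by rwa [hτ.mem_squareFinite, s_star, s_sq]
  have y_mem : y ∈ hτ.definitionIdeal := s_sq ▸ Submodule.mul_mem_mul hs hs
  have y_mem' : y ∈ hτ.squareFinite := s_sq ▸ hτ.mul_mem_squareFinite_left s hs
  have a_y : a * y = 0 := by
    have hya : y * star a ∈ hτ.squareFinite := hτ.mul_mem_squareFinite_right y_mem' (star a)
    have trace_eq := h y y_mem (y * star a) (hτ.mul_mem_definitionIdeal_right y_mem _)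
    have regroup : a * (y * (y * star a)) = star (y * star a) * (y * star a) := by
      rw [star_mul, star_star, y_star, mul_assoc]
    rw [regroup, hφ.apply_star_mul_self hτ.toIsTracialWeight hya, Complex.ofReal_eq_zero,
      ENNReal.toReal_eq_zero_iff] at trace_eq
    have product_eq := hτ.eq_zero_of_apply_eq_zero (star_mul_self_nonneg _)
      (trace_eq.resolve_right (ne_of_lt hya))
    have ya := (CStarRing.star_mul_self_eq_zero_iff _).mp product_eq
    simpa [y_star] using congrArg star ya
  have cube_le : star y * y * y ≤ 0 := by
    calc star y * y * y ≤ star y * (star a * a) * y := star_left_conjugate_le_conjugate y_le y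
      _ = 0 := by rw [mul_assoc, mul_assoc, a_y, mul_zero, mul_zero]
  have s_y : s * y = 0 := by
    refine (CStarRing.star_mul_self_eq_zero_iff _).mp (le_antisymm ?_ (star_mul_self_nonneg _))
    calc star (s * y) * (s * y) = star y * (s * s) * y := by
          rw [star_mul, s_star]; noncomm_ring
      _ ≤ 0 := s_sq ▸ cube_le
  refine y_ne ((CStarRing.star_mul_self_eq_zero_iff y).mp ?_)
  calc star y * y = s * (s * y) := by rw [y_star, ← mul_assoc, s_sq]
    _ = 0 := by rw [s_y, mul_zero]

end TraceOfDerivation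

/-! ### 2-local derivations -/

section TwoLocal

variable {A : Type*}

lemma IsSemiprimeRing.of_cstarRing [NormedRing A] [StarRing A] [CStarRing A] : IsSemiprimeRing A :=
  fun p h => by
    have h' : star (star p * p) * (star p * p) = 0 := by
      rw [star_mul, star_star, mul_assoc, ← mul_assoc p, h, mul_zero]
    exact (CStarRing.star_mul_self_eq_zero_iff p).mp
      ((CStarRing.star_mul_self_eq_zero_iff _).mp h')

lemma isLinearMap_of_isExtension [CStarAlgebra A] [PartialOrder A] [StarOrderedRing A]
    {τ : A → ℝ≥0∞} {φ : A →ₗ[ℂ] ℂ} (hτ : IsFaithfulSemifiniteTrace τ)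
    (hφ : IsTracialWeight.IsExtension τ φ) {Δ : A → A}
    (hΔ : ∀ x y, ∃ D : A →ₗ[ℂ] A, IsLeibniz D ∧ Δ x = D x ∧ Δ y = D y) : IsLinearMap ℂ Δ where
  map_add a b := by
    have by_parts (a x : A) (hx : x ∈ hτ.definitionIdeal) (y : A) (hy : y ∈ hτ.definitionIdeal) :
        φ (Δ a * (x * y)) = -φ (a * Δ (x * y)) := by
      obtain ⟨D, hD, Δ_a, Δ_xy⟩ := hΔ a (x * y)
      rw [Δ_a, Δ_xy, hφ.apply_map_mul_mul hτ.toIsTracialWeight hD a hx hy]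
    refine sub_eq_zero.mp (hτ.eq_zero_of_forall_apply_mul_eq_zero hφ fun x hx y hy => ?_)
    simp only [sub_mul, add_mul, map_sub, map_add, by_parts _ x hx y hy]
    ring
  map_smul c a := by
    obtain ⟨D, -, Δ_a, Δ_ca⟩ := hΔ a (c • a)
    rw [Δ_a, Δ_ca, map_smul]

lemma isJordanLeibniz_of_forall_exists_isLeibniz [Mul A] [Add A] {Δ : A → A}
    (hΔ : ∀ x y, ∃ D : A → A, IsLeibniz D ∧ Δ x = D x ∧ Δ y = D y) : IsJordanLeibniz Δ :=
  fun x => by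
    obtain ⟨D, hD, Δ_x, Δ_xx⟩ := hΔ x (x * x)
    rw [Δ_x, Δ_xx, hD]

theorem twoLocalDerivation_isDerivation_of_semifinite_general [CStarAlgebra A] [PartialOrder A]
    [StarOrderedRing A] {τ : A → ℝ≥0∞} (hτ : IsFaithfulSemifiniteTrace τ) {Δ : A → A}
    (hΔ : ∀ x y, ∃ D : A →ₗ[ℂ] A, IsLeibniz D ∧ Δ x = D x ∧ Δ y = D y) :
    IsLinearMap ℂ Δ ∧ IsLeibniz Δ := by
  obtain ⟨φ, hφ⟩ := hτ.exists_isExtension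
  have linear : IsLinearMap ℂ Δ := isLinearMap_of_isExtension hτ hφ hΔ
  have jordan : IsJordanLeibniz Δ := isJordanLeibniz_of_forall_exists_isLeibniz fun x y =>
    let ⟨D, hD⟩ := hΔ x y
    ⟨D, hD⟩
  have two_regular : IsSMulRegular A 2 := fun x y h =>
    smul_right_injective A (two_ne_zero' ℂ) (by simpa only [ofNat_smul_eq_nsmul] using h)
  exact ⟨linear, IsJordanLeibniz.isLeibniz (D := (linear.mk' Δ).toAddMonoidHom) jordan
    .of_cstarRing two_regular⟩

end TwoLocal

/-! ### Von Neumann algebras -/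

section VonNeumann

variable {M : VonNeumannAlgebra H}

noncomputable instance : CStarAlgebra M :=
  haveI : IsClosed (M : Set (H →L[ℂ] H)) :=
    M.centralizer_centralizer ▸ Set.isClosed_centralizer _
  StarSubalgebra.cstarAlgebra M

lemma cfcSqrt_mem {a : H →L[ℂ] H} (ha : a ∈ M) : CFC.sqrt a ∈ M := by
  rw [← M.commutant_commutant, VonNeumannAlgebra.mem_commutant_iff]
  intro b hb
  have comm : Commute a b := VonNeumannAlgebra.mem_commutant_iff.mp hb a ha
  exact (comm.cfcₙ_nnreal _).symm

/-- The order of `B(H)` restricted to a von Neumann algebra is its C⋆-order, since square roots stay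
in the algebra. -/
instance : StarOrderedRing M :=
  .of_nonneg_iff' (fun h z => add_le_add_right (α := H →L[ℂ] H) h z) fun x =>
    ⟨fun hx => by
      have hx' : (0 : H →L[ℂ] H) ≤ x := hx
      refine ⟨⟨CFC.sqrt (x : H →L[ℂ] H), cfcSqrt_mem x.2⟩, Subtype.ext ?_⟩
      have sqrt_star : star (CFC.sqrt (x : H →L[ℂ] H)) = CFC.sqrt (x : H →L[ℂ] H) :=
        (CFC.sqrt_nonneg _).isSelfAdjoint.star_eq
      change (x : H →L[ℂ] H) = star (CFC.sqrt (x : H →L[ℂ] H)) * CFC.sqrt (x : H →L[ℂ] H)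
      rw [sqrt_star, CFC.sqrt_mul_sqrt_self _ hx'], by
      rintro ⟨s, rfl⟩
      exact star_mul_self_nonneg (s : H →L[ℂ] H)⟩

lemma isPos_iff_nonneg {x : M} : IsPos M x ↔ 0 ≤ x :=
  (ContinuousLinearMap.nonneg_iff_isPositive _).symm

lemma opLE_iff_le {x y : M} : OpLE M x y ↔ x ≤ y :=
  Iff.rfl

lemma FNSTrace.isFaithfulSemifiniteTrace (T : FNSTrace M) : IsFaithfulSemifiniteTrace T.τ where
  apply_add hx hy := T.additive _ _ (isPos_iff_nonneg.mpr hx) (isPos_iff_nonneg.mpr hy)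
  apply_smul c _ hx := T.pos_smul c _ (isPos_iff_nonneg.mpr hx)
  apply_mul_star_self := T.tracial
  eq_zero_of_apply_eq_zero hx := T.faithful _ (isPos_iff_nonneg.mpr hx)
  exists_le_apply_lt_top hx hx0 := by
    simpa only [isPos_iff_nonneg, opLE_iff_le] using
      T.semifinite _ (isPos_iff_nonneg.mpr hx) hx0

lemma isDerivation_iff {D : M → M} : IsDerivation M D ↔ IsLinearMap ℂ D ∧ IsLeibniz D :=
  ⟨fun ⟨add, smul, leibniz⟩ => ⟨⟨add, smul⟩, leibniz⟩,
    fun ⟨linear, leibniz⟩ => ⟨linear.map_add, linear.map_smul, leibniz⟩⟩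

lemma Is2LocalDerivation.exists_isLeibniz {Δ : M → M} (hΔ : Is2LocalDerivation M Δ) (x y : M) :
    ∃ D : M →ₗ[ℂ] M, IsLeibniz D ∧ Δ x = D x ∧ Δ y = D y := by
  obtain ⟨D, hD, Δ_x, Δ_y⟩ := hΔ x y
  obtain ⟨linear, leibniz⟩ := isDerivation_iff.mp hD
  exact ⟨linear.mk' D, leibniz, Δ_x, Δ_y⟩

end VonNeumann

/-- Every 2-local derivation on a semi-finite von Neumann algebra (one admitting a faithful
normal semifinite trace) is a derivation. -/
theorem twoLocalDerivation_isDerivation_of_semifinite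
    (M : VonNeumannAlgebra H) (hM : Nonempty (FNSTrace M))
    (Δ : M → M) (hΔ : Is2LocalDerivation M Δ) :
    IsDerivation M Δ := by
  obtain ⟨T⟩ := hM
  exact isDerivation_iff.mpr <|
    twoLocalDerivation_isDerivation_of_semifinite_general T.isFaithfulSemifiniteTrace
      hΔ.exists_isLeibniz
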